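/- arXiv:2401.07433 — 6 statements merged into one kernel-verified Lean document; each statement's English description precedes it below -/
import Mathlib

section
/- Assume F has characteristic 2. Suppose u ∈ F^{2^k} satisfies u(0) = 0 (an M-SPC node: only position 0 is frozen, all other positions arbitrary), and let c be the associated codeword. Then ∑_{j=0}^{2^k−1} g0inv^{(k)}(j)·c(j) = 0; that is, the entries of the vector diag(g0inv^{(k)})·c satisfy a single parity-check equation. (Paper's Theorem 1.) -/
open Finset

variable {F : Type*}

/-- Kronecker power of a 2×2 matrix, defined by the binary-digit product formula:
the `(i,j)` entry of `kron M k` is `∏ t < k, M i_t j_t` where `i_t, j_t` are the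
`t`-th binary digits of `i` and `j`. -/
noncomputable def kron [Field F] (M : Matrix (Fin 2) (Fin 2) F) (k : ℕ) :
    Matrix (Fin (2 ^ k)) (Fin (2 ^ k)) F :=
  fun i j => ∏ t ∈ Finset.range k,
    M (if (i : ℕ).testBit t then 1 else 0) (if (j : ℕ).testBit t then 1 else 0)

/-- The 2×2 non-binary polar kernel with rows (μ, 0) and (γ, δ). -/
noncomputable def G2 [Field F] (μ γ δ : F) : Matrix (Fin 2) (Fin 2) F := !![μ, 0; γ, δ]

/-- `Gk μ γ δ k = G2^{⊗k}`, the k-fold Kronecker power of the kernel. -/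
noncomputable def Gk [Field F] (μ γ δ : F) (k : ℕ) : Matrix (Fin (2 ^ k)) (Fin (2 ^ k)) F :=
  kron (G2 μ γ δ) k

/-- `g0inv μ γ δ k` : first column of the inverse of `G2^{⊗k}`. -/
noncomputable def g0inv [Field F] (μ γ δ : F) (k : ℕ) (j : Fin (2 ^ k)) : F :=
  (Gk μ γ δ k)⁻¹ j ⟨0, Nat.two_pow_pos k⟩

/-- `rk μ γ δ k` : last row of `G2^{⊗k}`. -/
noncomputable def rk [Field F] (μ γ δ : F) (k : ℕ) (j : Fin (2 ^ k)) : F :=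
  Gk μ γ δ k ⟨2 ^ k - 1, by have := Nat.two_pow_pos k; omega⟩ j

/-- codeword associated to an input vector `u`: `cᵀ = uᵀ · G2^{⊗k}`. -/
noncomputable def codeword [Field F] (μ γ δ : F) (k : ℕ) (u : Fin (2 ^ k) → F)
    (j : Fin (2 ^ k)) : F :=
  ∑ i, u i * Gk μ γ δ k i j

theorem index_lt {p q n a b : ℕ} (ha : a < q) (hb : b < p) (h : p * q = n) :
    p * a + b < n := by
  subst h
  have h1 : p * a + b < p * (a + 1) := by
    have hm : p * (a + 1) = p * a + p := by ring
    omega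
  have h2 : p * (a + 1) ≤ p * q := Nat.mul_le_mul le_rfl ha
  omega

/-- Paper's Theorem 1: in characteristic 2, for an M-SPC node (`u(0) = 0`), the entries of
`diag(g0inv^{(k)})·c` satisfy a single parity-check equation. -/
theorem stmt5 [Field F] [CharP F 2] (μ γ δ : F) (hμ : μ ≠ 0) (hγ : γ ≠ 0) (hδ : δ ≠ 0)
    (k : ℕ) (u : Fin (2 ^ k) → F) (hu : u 0 = 0) :
    ∑ j, g0inv μ γ δ k j * codeword μ γ δ k u j = 0 := by
  by_cases h : IsUnit (Gk μ γ δ k).det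
  · have key : ∀ i, ∑ j, Gk μ γ δ k i j * g0inv μ γ δ k j
        = (1 : Matrix (Fin (2 ^ k)) (Fin (2 ^ k)) F) i ⟨0, Nat.two_pow_pos k⟩ := by
      intro i
      rw [← Matrix.mul_nonsing_inv _ h, Matrix.mul_apply]
      rfl
    have h1 : ∑ j, g0inv μ γ δ k j * codeword μ γ δ k u j
        = ∑ i, u i * ∑ j, Gk μ γ δ k i j * g0inv μ γ δ k j := by
      simp only [codeword, Finset.mul_sum]
      rw [Finset.sum_comm]
      refine Finset.sum_congr rfl fun i _ => Finset.sum_congr rfl fun j _ => ?_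
      ring
    rw [h1]
    refine Finset.sum_eq_zero fun i _ => ?_
    rw [key]
    by_cases hi : i = ⟨0, Nat.two_pow_pos k⟩
    · have h0 : i = 0 := by
        rw [hi]
        apply Fin.ext
        simp
      rw [h0, hu, zero_mul]
    · rw [Matrix.one_apply_ne hi, mul_zero]
  · refine Finset.sum_eq_zero fun j _ => ?_
    rw [g0inv, Matrix.nonsing_inv_apply_not_isUnit _ h]
    simp
end

section
/- Let k ≥ 1 and suppose u ∈ F^{2^k} satisfies u(i) = 0 for every i < 2^k − 2 (a Type-I node: only the last two positions are information positions). Let c be the associated codeword. Then for every 0 ≤ a < 2^{k−1}: c(2a) = (μ·u(2^k−2) + γ·u(2^k−1))·r^{(k−1)}(a) and c(2a+1) = δ·u(2^k−1)·r^{(k−1)}(a); that is, the even-indexed and odd-indexed entries of c each form a multiplicative repetition pattern along the last row of G2^{⊗(k−1)}. (Paper's Theorem 2.) -/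
open Finset

variable {F : Type*}

theorem Gk_succ_aux [Field F] (μ γ δ : F) (m : ℕ) (i j : Fin (2 ^ (m + 1)))
    (i' j' : Fin (2 ^ m)) (hi : (i : ℕ) / 2 = i') (hj : (j : ℕ) / 2 = j') :
    Gk μ γ δ (m + 1) i j = Gk μ γ δ m i' j' *
      G2 μ γ δ (if (i : ℕ) % 2 = 1 then 1 else 0) (if (j : ℕ) % 2 = 1 then 1 else 0) := by
  unfold Gk kron
  rw [Finset.prod_range_succ']
  simp only [Nat.testBit_succ, hi, hj, Nat.testBit_zero, decide_eq_true_eq]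

theorem codeword_aux [Field F] (μ γ δ : F) (m : ℕ)
    (u : Fin (2 ^ (m + 1)) → F)
    (hu : ∀ i : Fin (2 ^ (m + 1)), (i : ℕ) < 2 ^ (m + 1) - 2 → u i = 0)
    (j : Fin (2 ^ (m + 1))) (x y : Fin (2 ^ (m + 1))) (hx : (x : ℕ) = 2 ^ (m + 1) - 2)
    (hy : (y : ℕ) = 2 ^ (m + 1) - 1) :
    codeword μ γ δ (m + 1) u j = u x * Gk μ γ δ (m + 1) x j + u y * Gk μ γ δ (m + 1) y j := by
  have h1 := pow_succ 2 m
  have h2 := Nat.two_pow_pos m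
  have hxy : x ≠ y := by
    intro h
    have := congrArg Fin.val h
    omega
  unfold codeword
  rw [← Finset.sum_pair (f := fun i => u i * Gk μ γ δ (m + 1) i j) hxy]
  symm
  apply Finset.sum_subset (Finset.subset_univ _)
  intro i _ hi
  rw [hu i, zero_mul]
  simp only [Finset.mem_insert, Finset.mem_singleton, not_or, Fin.ext_iff] at hi
  have := i.isLt
  omega

/-- Paper's Theorem 2 (Type-I node, with `k = m + 1 ≥ 1`): if only the last two input
positions are nonzero, then the even- and odd-indexed entries of the codeword each form a
multiplicative repetition pattern along the last row of `G2^{⊗(k−1)}`. -/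
theorem stmt6 [Field F] (μ γ δ : F) (hμ : μ ≠ 0) (hγ : γ ≠ 0) (hδ : δ ≠ 0) (m : ℕ)
    (u : Fin (2 ^ (m + 1)) → F)
    (hu : ∀ i : Fin (2 ^ (m + 1)), (i : ℕ) < 2 ^ (m + 1) - 2 → u i = 0)
    (a : Fin (2 ^ m)) :
    codeword μ γ δ (m + 1) u
        ⟨2 * (a : ℕ), by have := pow_succ 2 m; have := a.isLt; omega⟩
      = (μ * u ⟨2 ^ (m + 1) - 2, by have := Nat.two_pow_pos (m + 1); omega⟩
          + γ * u ⟨2 ^ (m + 1) - 1, by have := Nat.two_pow_pos (m + 1); omega⟩)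
          * rk μ γ δ m a ∧
    codeword μ γ δ (m + 1) u
        ⟨2 * (a : ℕ) + 1, by have := pow_succ 2 m; have := a.isLt; omega⟩
      = δ * u ⟨2 ^ (m + 1) - 1, by have := Nat.two_pow_pos (m + 1); omega⟩
          * rk μ γ δ m a := by
  have h1 := pow_succ 2 m
  have h2 := Nat.two_pow_pos m
  have h3 := a.isLt
  have e1 : (2 ^ (m + 1) - 2) % 2 = 0 := by omega
  have e2 : (2 ^ (m + 1) - 1) % 2 = 1 := by omega
  have e3 : (2 * (a : ℕ) + 1) % 2 = 1 := by omega
  constructor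
  all_goals
    rw [codeword_aux μ γ δ m u hu _ ⟨2 ^ (m + 1) - 2, by omega⟩ ⟨2 ^ (m + 1) - 1, by omega⟩ rfl rfl,
      Gk_succ_aux μ γ δ m ⟨2 ^ (m + 1) - 2, by omega⟩ _ ⟨2 ^ m - 1, by omega⟩ a
        (by simp only []; omega) (by simp only []; omega),
      Gk_succ_aux μ γ δ m ⟨2 ^ (m + 1) - 1, by omega⟩ _ ⟨2 ^ m - 1, by omega⟩ a
        (by simp only []; omega) (by simp only []; omega)]
    simp [e1, e2, e3, G2, rk]
  all_goals ring
end

section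
/- Assume F has characteristic 2, let k ≥ 2, and suppose u ∈ F^{2^k} satisfies u(i) = 0 for every i < 2^k − 3 (a Type-II node: only the last three positions are information positions). Let c be the associated codeword, let v ∈ F^4 be the vector (0, u(2^k−3), u(2^k−2), u(2^k−1)), and let c2 ∈ F^4 be its codeword under G2^{⊗2}, c2(b) = ∑_{m<4} v(m)·G2^{⊗2}(m,b). Then (i) for all 0 ≤ a < 2^{k−2} and 0 ≤ b < 4, c(4a + b) = r^{(k−2)}(a)·c2(b), and (ii) ∑_{b=0}^{3} g0inv^{(2)}(b)·c2(b) = 0, i.e., c2 is the output of a length-4 M-SPC node. (Paper's Theorem 3.) -/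
open Finset

variable {F : Type*}

theorem kron_split [Field F] (M : Matrix (Fin 2) (Fin 2) F) (m : ℕ) (i j : Fin (2 ^ (m + 2)))
    (i1 j1 : Fin (2 ^ m)) (i2 j2 : Fin (2 ^ 2)) (hi : (i : ℕ) = 4 * i1 + i2)
    (hj : (j : ℕ) = 4 * j1 + j2) : kron M (m + 2) i j = kron M m i1 j1 * kron M 2 i2 j2 := by
  have low : ∀ a b t : ℕ, b < 2 ^ 2 → t < 2 → (4 * a + b).testBit t = b.testBit t := by
    intro a b t hb ht
    have := Nat.testBit_two_pow_mul_add a hb t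
    norm_num [ht] at this
    exact this
  have high : ∀ a b t : ℕ, b < 2 ^ 2 → (4 * a + b).testBit (2 + t) = a.testBit t := by
    intro a b t hb
    have := Nat.testBit_two_pow_mul_add a hb (2 + t)
    rw [if_neg (by omega), Nat.add_sub_cancel_left] at this
    exact this
  unfold kron
  rw [show Finset.range (m + 2) = Finset.range (2 + m) by rw [add_comm], Finset.prod_range_add,
    mul_comm]
  congr 1
  · refine Finset.prod_congr rfl fun t _ => ?_
    rw [hi, hj, high _ _ _ i2.isLt, high _ _ _ j2.isLt]
  · refine Finset.prod_congr rfl fun t ht => ?_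
    have ht := Finset.mem_range.1 ht
    rw [hi, hj, low _ _ _ i2.isLt ht, low _ _ _ j2.isLt ht]

theorem Gk2_det [Field F] (μ γ δ : F) (hμ : μ ≠ 0) (hδ : δ ≠ 0) : IsUnit (Gk μ γ δ 2).det := by
  rw [Matrix.det_of_lowerTriangular]
  · rw [isUnit_iff_ne_zero, Finset.prod_ne_zero_iff]
    intro i _
    unfold Gk kron
    rw [Finset.prod_ne_zero_iff]
    intro t _
    split_ifs <;> simp [G2, hμ, hδ]
  · intro i j hij
    have hij : i < j := hij
    unfold Gk kron
    revert hij
    fin_cases i <;> fin_cases j <;> simp [Finset.prod_range_succ, G2, Nat.testBit]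

/-- Paper's Theorem 3 (Type-II node, with `k = m + 2 ≥ 2`): if only the last three input
positions are nonzero then `c(4a+b) = r^{(k−2)}(a)·c2(b)` where `c2` is the codeword of
`v = (0, u(2^k−3), u(2^k−2), u(2^k−1))` under `G2^{⊗2}`, and `c2` satisfies the length-4
M-SPC parity check. -/
theorem stmt7 [Field F] [CharP F 2] (μ γ δ : F) (hμ : μ ≠ 0) (hγ : γ ≠ 0) (hδ : δ ≠ 0)
    (m : ℕ) (u : Fin (2 ^ (m + 2)) → F)
    (hu : ∀ i : Fin (2 ^ (m + 2)), (i : ℕ) < 2 ^ (m + 2) - 3 → u i = 0)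
    (v : Fin (2 ^ 2) → F)
    (hv : ∀ b : Fin (2 ^ 2), v b =
      if (b : ℕ) = 1 then u ⟨2 ^ (m + 2) - 3, by have := Nat.two_pow_pos (m + 2); omega⟩
      else if (b : ℕ) = 2 then u ⟨2 ^ (m + 2) - 2, by have := Nat.two_pow_pos (m + 2); omega⟩
      else if (b : ℕ) = 3 then u ⟨2 ^ (m + 2) - 1, by have := Nat.two_pow_pos (m + 2); omega⟩
      else 0)
    (c2 : Fin (2 ^ 2) → F)
    (hc2 : ∀ b : Fin (2 ^ 2), c2 b = ∑ mm, v mm * Gk μ γ δ 2 mm b) :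
    (∀ (a : Fin (2 ^ m)) (b : Fin (2 ^ 2)),
      codeword μ γ δ (m + 2) u
        ⟨4 * (a : ℕ) + (b : ℕ), by
          have ha := a.isLt; have hb := b.isLt
          have h4 : (2 : ℕ) ^ 2 = 4 := by norm_num
          have hpq : (2 : ℕ) ^ (m + 2) = 2 ^ m * 4 := by rw [pow_add]; norm_num
          omega⟩
        = rk μ γ δ m a * c2 b) ∧
    ∑ b, g0inv μ γ δ 2 b * c2 b = 0 := by
  have h4 : (2 : ℕ) ^ (m + 2) = 2 ^ m * 4 := by rw [pow_add]; norm_num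
  have hp := Nat.two_pow_pos m
  constructor
  · intro a b
    rw [hc2, Finset.mul_sum]
    unfold codeword
    symm
    have hb4 : ∀ b : Fin (2 ^ 2), (b : ℕ) < 4 := fun b => b.isLt
    refine Fintype.sum_of_injective
      (fun b : Fin (2 ^ 2) => (⟨4 * (2 ^ m - 1) + b, by have := hb4 b; omega⟩ : Fin (2 ^ (m + 2))))
      ?_ _ _ ?_ ?_
    · intro x y hxy
      simp only [Fin.mk.injEq] at hxy
      exact Fin.ext (by omega)
    · intro i hi
      rw [hu i, zero_mul]
      by_contra hlt
      apply hi
      have := i.isLt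
      exact ⟨⟨i - 4 * (2 ^ m - 1), by norm_num; omega⟩, Fin.ext (by simp only []; omega)⟩
    · intro x
      have hvx : v x = u ⟨4 * (2 ^ m - 1) + x, by have := hb4 x; omega⟩ := by
        have := hb4 x
        rw [hv]
        split_ifs
        · congr 2; omega
        · congr 2; omega
        · congr 2; omega
        · rw [hu]
          simp only []
          omega
      rw [hvx]
      unfold rk Gk
      rw [kron_split (G2 μ γ δ) m ⟨4 * (2 ^ m - 1) + x, by have := hb4 x; omega⟩ _
        ⟨2 ^ m - 1, by omega⟩ a x b rfl rfl]
      ring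
  · have h := Matrix.mul_nonsing_inv _ (Gk2_det μ γ δ hμ hδ)
    have e : c2 = Matrix.vecMul v (Gk μ γ δ 2) := by
      funext b
      rw [hc2]; rfl
    have h0 : Matrix.vecMul c2 (Gk μ γ δ 2)⁻¹ = v := by
      rw [e, Matrix.vecMul_vecMul, h, Matrix.vecMul_one]
    have h1 := congrFun h0 ⟨0, Nat.two_pow_pos 2⟩
    rw [hv] at h1
    simp only [Matrix.vecMul, dotProduct] at h1
    simp only [g0inv]
    rw [Finset.sum_congr rfl (fun b _ => mul_comm _ _), h1]
    simp
end

section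
/- Assume F has characteristic 2, let k ≥ 2, and suppose u ∈ F^{2^k} satisfies u(0) = u(1) = 0 (a Type-III node: the first two positions are frozen, all others arbitrary). Let c be the associated codeword. Then the even-indexed and odd-indexed entries of c each satisfy a parity-check equation weighted by g0inv^{(k−1)}: ∑_{a=0}^{2^{k−1}−1} g0inv^{(k−1)}(a)·c(2a) = 0 and ∑_{a=0}^{2^{k−1}−1} g0inv^{(k−1)}(a)·c(2a+1) = 0. (Paper's Theorem 4.) -/
open Finset

variable {F : Type*}

theorem Gk_isUnit_det [Field F] (μ γ δ : F) (hμ : μ ≠ 0) (hδ : δ ≠ 0) (k : ℕ) :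
    IsUnit (Gk μ γ δ k).det := by
  have htri : (Gk μ γ δ k).BlockTriangular OrderDual.toDual := by
    intro i j hij
    have hlt : (i : ℕ) < (j : ℕ) := by simpa using hij
    have hex : ∃ t, (j : ℕ).testBit t = true ∧ (i : ℕ).testBit t = false := by
      by_contra hcon
      push Not at hcon
      have hand : (j : ℕ) &&& (i : ℕ) = j := by
        apply Nat.eq_of_testBit_eq
        intro t
        have := hcon t
        rw [Nat.testBit_and]
        cases h1 : (j : ℕ).testBit t <;> simp_all
      have hle : (j : ℕ) &&& (i : ℕ) ≤ i := Nat.and_le_right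
      omega
    obtain ⟨t, hj, hi⟩ := hex
    have htk : t < k := by
      by_contra hge
      push Not at hge
      have : (j : ℕ) < 2 ^ t := lt_of_lt_of_le j.isLt (Nat.pow_le_pow_right (by norm_num) hge)
      rw [Nat.testBit_lt_two_pow this] at hj
      exact absurd hj (by simp)
    unfold Gk kron
    apply Finset.prod_eq_zero (Finset.mem_range.mpr htk)
    simp [hj, hi, G2]
  rw [Matrix.det_of_isLowerTriangular _ htri]
  rw [isUnit_iff_ne_zero]
  apply Finset.prod_ne_zero_iff.mpr
  intro i _
  unfold Gk kron
  apply Finset.prod_ne_zero_iff.mpr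
  intro t _
  cases h : (i : ℕ).testBit t <;> simp [G2, hμ, hδ]

theorem Gk_succ_entry [Field F] (μ γ δ : F) (k : ℕ) (i j : Fin (2 ^ (k + 1)))
    (i' j' : Fin (2 ^ k)) (hi : (i' : ℕ) = (i : ℕ) / 2) (hj : (j' : ℕ) = (j : ℕ) / 2) :
    Gk μ γ δ (k + 1) i j =
      Gk μ γ δ k i' j' * G2 μ γ δ (if (i : ℕ).testBit 0 then 1 else 0)
        (if (j : ℕ).testBit 0 then 1 else 0) := by
  unfold Gk kron
  rw [Finset.prod_range_succ']
  simp only [Nat.testBit_succ, hi, hj]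

theorem parity_aux [Field F] (μ γ δ : F) (hμ : μ ≠ 0) (hδ : δ ≠ 0)
    (m : ℕ) (u : Fin (2 ^ (m + 2)) → F) (hu0 : u 0 = 0) (hu1 : u 1 = 0) (b : Bool)
    (f : Fin (2 ^ (m + 1)) → Fin (2 ^ (m + 2))) (hf : ∀ a : Fin (2 ^ (m + 1)), (a : ℕ) = (f a : ℕ) / 2)
    (hb : ∀ a, (f a : ℕ).testBit 0 = b) :
    (∑ a : Fin (2 ^ (m + 1)), g0inv μ γ δ (m + 1) a * codeword μ γ δ (m + 2) u (f a)) = 0 := by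
  unfold codeword
  simp only [Finset.mul_sum]
  rw [Finset.sum_comm]
  apply Finset.sum_eq_zero
  intro i _
  have hlt : (i : ℕ) / 2 < 2 ^ (m + 1) := by
    have h2 : (2 : ℕ) ^ (m + 2) = 2 ^ (m + 1) * 2 := by ring
    have := i.isLt
    omega
  by_cases hi : (i : ℕ) / 2 = 0
  · have hui : u i = 0 := by
      have hc : (i : ℕ) = 0 ∨ (i : ℕ) = 1 := by omega
      rcases hc with h | h
      · have : i = 0 := Fin.ext (by simpa using h)
        rw [this, hu0]
      · have : i = 1 := Fin.ext (by
          rw [h, Fin.val_one', Nat.mod_eq_of_lt]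
          exact Nat.one_lt_two_pow (by omega))
        rw [this, hu1]
    simp [hui]
  · have hmul := Matrix.mul_nonsing_inv _ (Gk_isUnit_det μ γ δ hμ hδ (m + 1))
    have hent := congrFun (congrFun hmul ⟨(i : ℕ) / 2, hlt⟩) ⟨0, Nat.two_pow_pos (m + 1)⟩
    rw [Matrix.mul_apply, Matrix.one_apply_ne (by simpa [Fin.ext_iff] using hi)] at hent
    have key : ∀ a, g0inv μ γ δ (m + 1) a * (u i * Gk μ γ δ (m + 2) i (f a)) =
        (u i * G2 μ γ δ (if (i : ℕ).testBit 0 then 1 else 0) (if b then 1 else 0)) *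
        (Gk μ γ δ (m + 1) ⟨(i : ℕ) / 2, hlt⟩ a *
          (Gk μ γ δ (m + 1))⁻¹ a ⟨0, Nat.two_pow_pos (m + 1)⟩) := by
      intro a
      rw [Gk_succ_entry μ γ δ (m + 1) i (f a) ⟨(i : ℕ) / 2, hlt⟩ a rfl (hf a), hb a]
      unfold g0inv
      ring
    rw [Finset.sum_congr rfl (fun a _ => key a), ← Finset.mul_sum, hent, mul_zero]

/-- Paper's Theorem 4 (Type-III node, with `k = m + 2 ≥ 2`): in characteristic 2, if the
first two input positions are frozen then the even- and odd-indexed entries of the codeword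
each satisfy a parity-check equation weighted by `g0inv^{(k−1)}`. -/
theorem stmt8 [Field F] [CharP F 2] (μ γ δ : F) (hμ : μ ≠ 0) (hγ : γ ≠ 0) (hδ : δ ≠ 0)
    (m : ℕ) (u : Fin (2 ^ (m + 2)) → F) (hu0 : u 0 = 0) (hu1 : u 1 = 0) :
    (∑ a : Fin (2 ^ (m + 1)), g0inv μ γ δ (m + 1) a *
        codeword μ γ δ (m + 2) u
          ⟨2 * (a : ℕ), by have h2 : (2 : ℕ) ^ (m + 2) = 2 ^ (m + 1) * 2 := (by ring); have := a.isLt; omega⟩) = 0 ∧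
    (∑ a : Fin (2 ^ (m + 1)), g0inv μ γ δ (m + 1) a *
        codeword μ γ δ (m + 2) u
          ⟨2 * (a : ℕ) + 1, by have h2 : (2 : ℕ) ^ (m + 2) = 2 ^ (m + 1) * 2 := (by ring); have := a.isLt; omega⟩) = 0 := by
  constructor
  · exact parity_aux μ γ δ hμ hδ m u hu0 hu1 false (fun a => ⟨2 * (a : ℕ), _⟩)
      (fun a => by simp) (fun a => by simp [Nat.testBit_zero])
  · exact parity_aux μ γ δ hμ hδ m u hu0 hu1 true (fun a => ⟨2 * (a : ℕ) + 1, _⟩)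
      (fun a => by simp only []; omega) (fun a => by simp [Nat.testBit_zero])
end

section
/- Let k ≥ 3 and suppose u ∈ F^{2^k} satisfies u(i) = 0 for every i not in {2^k−5, 2^k−3, 2^k−2, 2^k−1} (a Type-V node). Let c be the associated codeword. Define v ∈ F^8 by v(3) = u(2^k−5), v(5) = u(2^k−3), v(6) = u(2^k−2), v(7) = u(2^k−1), and v(m) = 0 otherwise, and let c_r ∈ F^8 be its codeword under G2^{⊗3}, c_r(b) = ∑_{m<8} v(m)·G2^{⊗3}(m,b). Then for all 0 ≤ a < 2^{k−3} and 0 ≤ b < 8: c(8a + b) = r^{(k−3)}(a)·c_r(b). (Paper's Theorem 6.) -/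
open Finset

variable {F : Type*}

theorem Gk_split [Field F] (μ γ δ : F) (m x y c b : ℕ) (hx : x < 2 ^ m) (hy : y < 2 ^ m)
    (hc : c < 2 ^ 3) (hb : b < 2 ^ 3) (h1 : 8 * x + c < 2 ^ (m + 3))
    (h2 : 8 * y + b < 2 ^ (m + 3)) :
    Gk μ γ δ (m + 3) ⟨8 * x + c, h1⟩ ⟨8 * y + b, h2⟩ =
      Gk μ γ δ m ⟨x, hx⟩ ⟨y, hy⟩ * Gk μ γ δ 3 ⟨c, hc⟩ ⟨b, hb⟩ := by
  have key : ∀ x c : ℕ, c < 2 ^ 3 → ∀ t, (8 * x + c).testBit t =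
      if t < 3 then c.testBit t else x.testBit (t - 3) := fun x c hc t =>
    Nat.testBit_two_pow_mul_add x hc t
  unfold Gk kron
  simp only [key x c hc, key y b hb]
  rw [add_comm m 3, Finset.prod_range_add, mul_comm]
  congr 1
  · refine Finset.prod_congr rfl fun t _ => ?_
    have h : ¬ (3 + t < 3) := by omega
    simp [h]

/-- Paper's Theorem 6 (Type-V node, with `k = m + 3 ≥ 3`): if only input positions
`2^k−5, 2^k−3, 2^k−2, 2^k−1` are nonzero, then `c(8a+b) = r^{(k−3)}(a)·c_r(b)` where `c_r`
is the codeword under `G2^{⊗3}` of the length-8 vector `v` supported on positions 3,5,6,7. -/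
theorem stmt10 [Field F] (μ γ δ : F) (hμ : μ ≠ 0) (hγ : γ ≠ 0) (hδ : δ ≠ 0)
    (m : ℕ) (u : Fin (2 ^ (m + 3)) → F)
    (hu : ∀ i : Fin (2 ^ (m + 3)), (i : ℕ) ≠ 2 ^ (m + 3) - 5 → (i : ℕ) ≠ 2 ^ (m + 3) - 3 →
      (i : ℕ) ≠ 2 ^ (m + 3) - 2 → (i : ℕ) ≠ 2 ^ (m + 3) - 1 → u i = 0)
    (v : Fin (2 ^ 3) → F)
    (hv : ∀ b : Fin (2 ^ 3), v b =
      if (b : ℕ) = 3 then u ⟨2 ^ (m + 3) - 5, by have := Nat.two_pow_pos (m + 3); omega⟩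
      else if (b : ℕ) = 5 then u ⟨2 ^ (m + 3) - 3, by have := Nat.two_pow_pos (m + 3); omega⟩
      else if (b : ℕ) = 6 then u ⟨2 ^ (m + 3) - 2, by have := Nat.two_pow_pos (m + 3); omega⟩
      else if (b : ℕ) = 7 then u ⟨2 ^ (m + 3) - 1, by have := Nat.two_pow_pos (m + 3); omega⟩
      else 0)
    (cr : Fin (2 ^ 3) → F)
    (hcr : ∀ b : Fin (2 ^ 3), cr b = ∑ mm, v mm * Gk μ γ δ 3 mm b)
    (a : Fin (2 ^ m)) (b : Fin (2 ^ 3)) :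
    codeword μ γ δ (m + 3) u
        ⟨8 * (a : ℕ) + (b : ℕ), by
          have ha := a.isLt; have hb := b.isLt
          have h8 : (2 : ℕ) ^ 3 = 8 := by norm_num
          have hpq : (2 : ℕ) ^ (m + 3) = 2 ^ m * 8 := by rw [pow_add]; norm_num
          omega⟩
      = rk μ γ δ m a * cr b := by
  have hpq : (2 : ℕ) ^ (m + 3) = 2 ^ m * 8 := by rw [pow_add]; norm_num
  have hpos := Nat.two_pow_pos m
  have hlt : ∀ c : Fin (2 ^ 3), 8 * (2 ^ m - 1) + (c : ℕ) < 2 ^ (m + 3) := by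
    intro c
    have hc := c.isLt
    omega
  have hve : ∀ c : Fin (2 ^ 3), v c = u ⟨8 * (2 ^ m - 1) + (c : ℕ), hlt c⟩ := by
    intro c
    have hc := c.isLt
    rw [hv c]
    split_ifs
    · congr 2; omega
    · congr 2; omega
    · congr 2; omega
    · congr 2; omega
    · symm
      apply hu <;> simp only <;> omega
  unfold codeword rk
  rw [hcr, Finset.mul_sum]
  symm
  refine Fintype.sum_of_injective
    (fun c : Fin (2 ^ 3) => (⟨8 * (2 ^ m - 1) + (c : ℕ), hlt c⟩ : Fin (2 ^ (m + 3)))) ?_ _ _ ?_ ?_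
  · intro c d h
    simp only [Fin.mk.injEq] at h
    ext
    omega
  · intro i hi
    have hz : u i = 0 := by
      have hil := i.isLt
      have hn : ∀ c : ℕ, c < 8 → (i : ℕ) ≠ 8 * (2 ^ m - 1) + c := by
        intro c hc h
        exact hi ⟨⟨c, by omega⟩, Fin.ext h.symm⟩
      have h3 := hn 3 (by norm_num)
      have h5 := hn 5 (by norm_num)
      have h6 := hn 6 (by norm_num)
      have h7 := hn 7 (by norm_num)
      apply hu <;> omega
    rw [hz, zero_mul]
  · intro c
    rw [hve c, Gk_split μ γ δ m (2 ^ m - 1) a c b (by omega) a.isLt c.isLt b.isLt]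
    ring
end

section
/- Let 0 ≤ s' ≤ k and suppose u ∈ F^{2^k} satisfies u(i) = 0 for every i < 2^k − 2^{s'} (a GM-REP node: all descendants are frozen except the rightmost length-2^{s'} source node). Let c be the associated codeword, and let c' ∈ F^{2^{s'}} be the codeword of the last 2^{s'} entries of u under G2^{⊗s'}, i.e., c'(b) = ∑_{m<2^{s'}} u(2^k − 2^{s'} + m)·G2^{⊗s'}(m,b). Then for all 0 ≤ a < 2^{k−s'} and 0 ≤ b < 2^{s'}: c(2^{s'}·a + b) = r^{(k−s')}(a)·c'(b). (Paper's Theorem 7.) -/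
open Finset

variable {F : Type*}

/-- Paper's Theorem 7 (GM-REP node): if all input positions below `2^k − 2^{s'}` are frozen,
then `c(2^{s'}·a + b) = r^{(k−s')}(a)·c'(b)`, where `c'` is the codeword of the last
`2^{s'}` inputs under `G2^{⊗s'}` (the source node). -/
theorem stmt11 [Field F] (μ γ δ : F) (hμ : μ ≠ 0) (hγ : γ ≠ 0) (hδ : δ ≠ 0)
    (k s' : ℕ) (hs : s' ≤ k)
    (u : Fin (2 ^ k) → F) (hu : ∀ i : Fin (2 ^ k), (i : ℕ) < 2 ^ k - 2 ^ s' → u i = 0)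
    (c' : Fin (2 ^ s') → F)
    (hc' : ∀ b : Fin (2 ^ s'), c' b = ∑ mm : Fin (2 ^ s'),
      u ⟨2 ^ k - 2 ^ s' + (mm : ℕ), by
          have h1 : (2 : ℕ) ^ s' ≤ 2 ^ k := Nat.pow_le_pow_right (by norm_num) hs
          have := mm.isLt; omega⟩ * Gk μ γ δ s' mm b)
    (a : Fin (2 ^ (k - s'))) (b : Fin (2 ^ s')) :
    codeword μ γ δ k u
        ⟨2 ^ s' * (a : ℕ) + (b : ℕ),
          index_lt a.isLt b.isLt (by rw [← pow_add]; congr 1; omega)⟩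
      = rk μ γ δ (k - s') a * c' b := by
  obtain ⟨d, rfl⟩ := Nat.exists_eq_add_of_le hs
  have h1 : (2 : ℕ) ^ s' ≤ 2 ^ (s' + d) := Nat.pow_le_pow_right (by norm_num) hs
  have hd : s' + d - s' = d := by omega
  have hidx : 2 ^ (s' + d) - 2 ^ s' = 2 ^ s' * (2 ^ (s' + d - s') - 1) := by
    rw [hd, Nat.mul_sub, pow_add, mul_one]
  rw [hc' b, Finset.mul_sum]
  unfold codeword
  symm
  refine Fintype.sum_of_injective
    (fun mm : Fin (2 ^ s') => (⟨2 ^ (s' + d) - 2 ^ s' + (mm : ℕ), by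
      have := mm.isLt; omega⟩ : Fin (2 ^ (s' + d)))) ?_ _ _ ?_ ?_
  · intro x y hxy
    simp only [Fin.mk.injEq] at hxy
    ext
    omega
  · intro i hi
    rw [hu i, zero_mul]
    by_contra hlt
    apply hi
    refine ⟨⟨(i : ℕ) - (2 ^ (s' + d) - 2 ^ s'), by have := i.isLt; omega⟩, ?_⟩
    ext
    simp only
    omega
  · intro mm
    have key : Gk μ γ δ (s' + d) ⟨2 ^ (s' + d) - 2 ^ s' + (mm : ℕ), by
          have := mm.isLt; omega⟩ ⟨2 ^ s' * (a : ℕ) + (b : ℕ),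
          index_lt a.isLt b.isLt (by rw [← pow_add]; congr 1; omega)⟩
        = rk μ γ δ (s' + d - s') a * Gk μ γ δ s' mm b := by
      unfold rk Gk kron
      simp only [hidx]
      rw [Finset.prod_range_add, mul_comm]
      congr 1
      · refine Finset.prod_congr (by rw [hd]) fun t _ => ?_
        rw [Nat.testBit_two_pow_mul_add _ mm.isLt, Nat.testBit_two_pow_mul_add _ b.isLt]
        simp
      · refine Finset.prod_congr rfl fun t ht => ?_
        rw [Nat.testBit_two_pow_mul_add _ mm.isLt, Nat.testBit_two_pow_mul_add _ b.isLt]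
        simp [Finset.mem_range.mp ht]
    simp only [key]
    ring
end
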